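/- If two players in a zero-sum game with convex-concave payoff play sequences with total regret at most ν_1·T and ν_2·T respectively, then the pair of average plays is a (ν_1 + ν_2)-approximate minimax equilibrium. -/

import Mathlib

/-- No-regret dynamics (Freund–Schapire): in a zero-sum game with convex-concave
nonnegative payoff U over convex strategy sets S₁, S₂, if the two play sequences
have total regret at most ν₁·T and ν₂·T respectively, then the pair of average
plays is a (ν₁+ν₂)-approximate minimax equilibrium. -/
theorem stmt_6 {E1 E2 : Type*} [AddCommGroup E1] [Module ℝ E1]
    [AddCommGroup E2] [Module ℝ E2]
    (S1 : Set E1) (S2 : Set E2) (hS1 : Convex ℝ S1) (hS2 : Convex ℝ S2)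
    (U : E1 → E2 → ℝ)
    (hU0 : ∀ s1 ∈ S1, ∀ s2 ∈ S2, 0 ≤ U s1 s2)
    (hUconvex : ∀ s2 ∈ S2, ConvexOn ℝ S1 (fun s1 => U s1 s2))
    (hUconcave : ∀ s1 ∈ S1, ConcaveOn ℝ S2 (fun s2 => U s1 s2))
    (T : ℕ) (hT : 0 < T)
    (s1seq : Fin T → E1) (s2seq : Fin T → E2)
    (hs1 : ∀ t, s1seq t ∈ S1) (hs2 : ∀ t, s2seq t ∈ S2)
    (ν1 ν2 : ℝ) (hν1 : 0 ≤ ν1) (hν2 : 0 ≤ ν2)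
    (hreg1 : ∀ s1 ∈ S1,
      (∑ t, U (s1seq t) (s2seq t)) - (∑ t, U s1 (s2seq t)) ≤ ν1 * T)
    (hreg2 : ∀ s2 ∈ S2,
      (∑ t, U (s1seq t) s2) - (∑ t, U (s1seq t) (s2seq t)) ≤ ν2 * T) :
    (∀ s1 ∈ S1,
      U ((T : ℝ)⁻¹ • ∑ t, s1seq t) ((T : ℝ)⁻¹ • ∑ t, s2seq t)
        - U s1 ((T : ℝ)⁻¹ • ∑ t, s2seq t) ≤ ν1 + ν2) ∧
    (∀ s2 ∈ S2,
      U ((T : ℝ)⁻¹ • ∑ t, s1seq t) s2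
        - U ((T : ℝ)⁻¹ • ∑ t, s1seq t) ((T : ℝ)⁻¹ • ∑ t, s2seq t) ≤ ν1 + ν2) := by
  have hTp : (0 : ℝ) < T := by exact_mod_cast hT
  have hw0 : ∀ t ∈ (Finset.univ : Finset (Fin T)), (0 : ℝ) ≤ (fun _ : Fin T => (T : ℝ)⁻¹) t :=
    fun _ _ => by positivity
  have hw1 : ∑ t : Fin T, (fun _ : Fin T => (T : ℝ)⁻¹) t = 1 := by
    simp [hTp.ne']
  have m1 : (T : ℝ)⁻¹ • ∑ t, s1seq t ∈ S1 := by
    rw [Finset.smul_sum]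
    exact hS1.sum_mem hw0 hw1 (fun t _ => hs1 t)
  have m2 : (T : ℝ)⁻¹ • ∑ t, s2seq t ∈ S2 := by
    rw [Finset.smul_sum]
    exact hS2.sum_mem hw0 hw1 (fun t _ => hs2 t)
  have j1 : ∀ y ∈ S2, U ((T : ℝ)⁻¹ • ∑ t, s1seq t) y * T ≤ ∑ t, U (s1seq t) y := by
    intro y hy
    have h := (hUconvex y hy).map_sum_le hw0 hw1 (fun t _ => hs1 t)
    simp only [← Finset.smul_sum, smul_eq_mul] at h
    rwa [← Finset.mul_sum, inv_mul_eq_div, le_div_iff₀ hTp] at h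
  have j2 : ∀ x ∈ S1, ∑ t, U x (s2seq t) ≤ U x ((T : ℝ)⁻¹ • ∑ t, s2seq t) * T := by
    intro x hx
    have h := (hUconcave x hx).le_map_sum hw0 hw1 (fun t _ => hs2 t)
    simp only [← Finset.smul_sum, smul_eq_mul] at h
    rwa [← Finset.mul_sum, inv_mul_eq_div, div_le_iff₀ hTp] at h
  constructor
  · intro x hx
    refine le_of_mul_le_mul_right ?_ hTp
    linarith [j1 _ m2, hreg2 _ m2, hreg1 x hx, j2 x hx]
  · intro y hy
    refine le_of_mul_le_mul_right ?_ hTp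
    linarith [j1 y hy, hreg2 y hy, hreg1 _ m1, j2 _ m1]
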